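/- Let V be a finite nonempty type, E : Finset (V × V) a directed road network, S a finite set of terminals in V with at least two elements, R_S the set of all ordered pairs (s, s') of distinct terminals of S, and b ∈ ℕ a budget. Then there exists Q' ⊆ E with |Q'| ≤ b and f*(E \ Q', R_S) = 0 if and only if there exists a directed multiway cut F ⊆ E for S with |F| ≤ b. (This is the equivalence between the decision version of the problem of Maximizing Disruption with attack efficiency ξ = 0 and the Minimum Multiway Cut decision problem.) -/

import Mathlib

open scoped ENNReal

/-- A directed walk of length `n` from `s` to `t` using only edges in `A`. -/
def IsDirWalk {V : Type*} (A : Finset (V × V)) (s t : V) (n : ℕ) : Prop :=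
  ∃ f : ℕ → V, f 0 = s ∧ f n = t ∧ ∀ i < n, (f i, f (i + 1)) ∈ A

/-- The directed distance `d_A(s,t)` in `ℝ≥0∞`: the infimum of lengths of
directed walks from `s` to `t` in `A` (`∞` if there is no such walk). -/
noncomputable def dDist {V : Type*} (A : Finset (V × V)) (s t : V) : ℝ≥0∞ :=
  sInf {x : ℝ≥0∞ | ∃ n : ℕ, IsDirWalk A s t n ∧ x = (n : ℝ≥0∞)}

/-- The traffic-quality objective `f*` under the simple traffic model `M∅`. -/
noncomputable def fStar {V : Type*} (A : Finset (V × V)) (R : Finset (V × V)) : ℝ≥0∞ :=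
  (R.card : ℝ≥0∞)⁻¹ * ∑ p ∈ R, (dDist A p.1 p.2)⁻¹

/-- The ride set `R_S`: all ordered pairs of distinct terminals of `S`. -/
def ridesOf {V : Type*} [DecidableEq V] (S : Finset V) : Finset (V × V) :=
  (S ×ˢ S).filter fun p => p.1 ≠ p.2

/-- `F` is a directed multiway cut for the terminal set `S` in the network `E`:
in `E \ F` there is no directed walk between any two distinct terminals. -/
def IsDirMultiwayCut {V : Type*} [DecidableEq V] (E F : Finset (V × V)) (S : Finset V) : Prop :=
  ∀ s ∈ S, ∀ s' ∈ S, s ≠ s' → ∀ n : ℕ, ¬ IsDirWalk (E \ F) s s' n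

/-- `F` is a directed multicut for the set `P` of source–destination pairs in `E`:
in `E \ F` there is no directed walk from `s` to `t` for any `(s,t) ∈ P`. -/
def IsDirMulticut {V : Type*} [DecidableEq V] (E F : Finset (V × V)) (P : Finset (V × V)) : Prop :=
  ∀ p ∈ P, ∀ n : ℕ, ¬ IsDirWalk (E \ F) p.1 p.2 n

section Objective

variable {V : Type*} {A R : Finset (V × V)} {s t : V}

theorem dDist_eq_top_iff : dDist A s t = ∞ ↔ ∀ n, ¬ IsDirWalk A s t n := by
  rw [dDist, sInf_eq_top]
  constructor
  · intro h n walk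
    exact ENNReal.natCast_ne_top n (h n ⟨n, walk, rfl⟩)
  · rintro no_walk _ ⟨n, walk, rfl⟩
    exact absurd walk (no_walk n)

/-- For `R = ∅` the average is `0⁻¹ * 0 = ∞ * 0 = 0`. -/
theorem fStar_eq_zero_iff : fStar A R = 0 ↔ ∀ p ∈ R, dDist A p.1 p.2 = ∞ := by
  have weight_ne_zero : (R.card : ℝ≥0∞)⁻¹ ≠ 0 :=
    ENNReal.inv_ne_zero.mpr (ENNReal.natCast_ne_top _)
  simp only [fStar, mul_eq_zero, weight_ne_zero, false_or, Finset.sum_eq_zero_iff,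
    ENNReal.inv_eq_zero]

end Objective

section Cuts

variable {V : Type*} [DecidableEq V] {E F R : Finset (V × V)} {S : Finset V}

theorem fStar_sdiff_eq_zero_iff_isDirMulticut : fStar (E \ F) R = 0 ↔ IsDirMulticut E F R := by
  simp only [fStar_eq_zero_iff, dDist_eq_top_iff, IsDirMulticut]

theorem mem_ridesOf {p : V × V} : p ∈ ridesOf S ↔ p.1 ∈ S ∧ p.2 ∈ S ∧ p.1 ≠ p.2 := by
  simp only [ridesOf, Finset.mem_filter, Finset.mem_product, and_assoc]

theorem ridesOf_nonempty (hS : S.Nontrivial) : (ridesOf S).Nonempty := by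
  obtain ⟨s, hs, s', hs', hne⟩ := hS
  exact ⟨(s, s'), mem_ridesOf.mpr ⟨hs, hs', hne⟩⟩

theorem isDirMulticut_ridesOf_iff : IsDirMulticut E F (ridesOf S) ↔ IsDirMultiwayCut E F S := by
  constructor
  · intro h s hs s' hs' hne
    exact h (s, s') (mem_ridesOf.mpr ⟨hs, hs', hne⟩)
  · intro h p hp
    obtain ⟨hs, hs', hne⟩ := mem_ridesOf.mp hp
    exact h p.1 hs p.2 hs' hne

end Cuts

theorem stmt_4_general {V : Type*} [DecidableEq V] (E R : Finset (V × V)) (_hR : R.Nonempty)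
    (b : ℕ) :
    (∃ Q' ⊆ E, Q'.card ≤ b ∧ fStar (E \ Q') R = 0) ↔
    (∃ F ⊆ E, F.card ≤ b ∧ IsDirMulticut E F R) := by
  simp only [fStar_sdiff_eq_zero_iff_isDirMulticut]

theorem stmt_4 {V : Type*} [Fintype V] [Nonempty V] [DecidableEq V]
    (E : Finset (V × V)) (S : Finset V) (hS : 2 ≤ S.card) (b : ℕ) :
    (∃ Q' ⊆ E, Q'.card ≤ b ∧ fStar (E \ Q') (ridesOf S) = 0) ↔
    (∃ F ⊆ E, F.card ≤ b ∧ IsDirMultiwayCut E F S) := by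
  have rides_nonempty := ridesOf_nonempty (Finset.one_lt_card_iff_nontrivial.mp hS)
  simpa only [isDirMulticut_ridesOf_iff] using stmt_4_general E (ridesOf S) rides_nonempty b
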